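/- Let F be an algebraically closed field with characteristic ≠ 2. Then the automorphism group of the algebra E5 with MSC [[1,0,0,-1],[-1,0,0,1]] is Aut(E5) = { [[t,1-t],[1-t,t]] : t ∈ F, t ≠ 1/2 }. -/

import Mathlib

open Matrix Kronecker

variable {F : Type*}

/-- The Kronecker (tensor) product of two `2 × 2` matrices, realized as a `4 × 4` matrix;
rows/columns are indexed in row-major order by the pairs `(1,1), (1,2), (2,1), (2,2)`. -/
def kron [CommRing F] (g h : Matrix (Fin 2) (Fin 2) F) : Matrix (Fin 4) (Fin 4) F :=
  Matrix.reindex finProdFinEquiv finProdFinEquiv (g ⊗ₖ h)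

/-- Two `2`-dimensional algebras given by matrices of structure constants `A, B`
are isomorphic iff `B = g · A · (g⁻¹ ⊗ g⁻¹)` for some `g ∈ GL(2, F)`. -/
def Isomorphic [Field F] (A B : Matrix (Fin 2) (Fin 4) F) : Prop :=
  ∃ g : GL (Fin 2) F,
    B = (g : Matrix (Fin 2) (Fin 2) F) * A *
        kron ((↑(g⁻¹) : Matrix (Fin 2) (Fin 2) F)) ((↑(g⁻¹) : Matrix (Fin 2) (Fin 2) F))

/-- The automorphism group of the algebra with MSC `E`, as a set of (invertible) `2 × 2`
matrices: `Aut(E) = {g ∈ GL(2,F) : g·E = E·(g ⊗ g)}`. -/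
def Aut [Field F] (E : Matrix (Fin 2) (Fin 4) F) : Set (Matrix (Fin 2) (Fin 2) F) :=
  {g | IsUnit g ∧ g * E = E * kron g g}

/-- The derivation algebra of the algebra with MSC `E`:
`Der(E) = { D : E·(D ⊗ I + I ⊗ D) = D·E }`. -/
def Der [Field F] (E : Matrix (Fin 2) (Fin 4) F) : Set (Matrix (Fin 2) (Fin 2) F) :=
  {D | E * (kron D 1 + kron 1 D) = D * E}

/-!
The product of the algebra is `u · v = Q(u, v) w`, where `w = (1, -1)` and `Q` is the bilinear form
with Gram matrix `diag(1, -1)`. Hence an invertible `g` is an automorphism exactly when, for some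
scalar `c`, it scales `w` by `c` and is a similitude of `Q` with multiplier `c`.

The first condition says that both columns of `g` have the same sum `s`, that `c` is the difference
of the entries of the first row, and hence that `det g = s c`, so `s` and `c` are invertible. In the
second condition, the off-diagonal entry then forces `g` to be symmetric, with equal diagonal
entries, and the upper left entry reads `s c = c`, that is, `s = 1`.
-/

theorem vecMulVec_eq_vecMulVec_iff {K m n : Type*} [Field K] {u u' : m → K} {v v' : n → K}
    (hu : u ≠ 0) (hv : v ≠ 0) :
    vecMulVec u' v = vecMulVec u v' ↔ ∃ c : K, u' = c • u ∧ v' = c • v := by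
  constructor
  · intro h
    have entry (i : m) (j : n) : u' i * v j = u i * v' j := congrFun₂ h i j
    obtain ⟨i₀, hi₀⟩ := Function.ne_iff.mp hu
    obtain ⟨j₀, hj₀⟩ := Function.ne_iff.mp hv
    rw [Pi.zero_apply] at hi₀ hj₀
    have hv' (j : n) : v' j = u' i₀ / u i₀ * v j := by
      rw [div_mul_eq_mul_div, entry, mul_div_cancel_left₀ _ hi₀]
    refine ⟨u' i₀ / u i₀, funext fun i ↦ mul_right_cancel₀ hj₀ ?_, funext hv'⟩
    rw [entry, hv', Pi.smul_apply, smul_eq_mul]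
    ring
  · rintro ⟨c, rfl, rfl⟩
    rw [smul_vecMulVec, vecMulVec_smul]

/-- The entries of `Q` row by row, that is, in the order in which `kron` lists the index pairs;
Mathlib's `vec` stacks columns, hence the transpose. -/
def rowVec {α : Type*} (Q : Matrix (Fin 2) (Fin 2) α) : Fin 4 → α :=
  vec Qᵀ ∘ (finProdFinEquiv (m := 2) (n := 2)).symm

theorem rowVec_injective {α : Type*} :
    Function.Injective (rowVec : Matrix (Fin 2) (Fin 2) α → Fin 4 → α) := fun _ _ h ↦
  transpose_injective (vec_inj.mp (finProdFinEquiv.symm.surjective.injective_comp_right h))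

theorem rowVec_vecMul_kron [CommRing F] (Q g h : Matrix (Fin 2) (Fin 2) F) :
    rowVec Q ᵥ* kron g h = rowVec (gᵀ * Q * h) := by
  have rowVec_comp : rowVec Q ∘ finProdFinEquiv (m := 2) (n := 2) = vec Qᵀ := by
    rw [rowVec, Function.comp_assoc, Equiv.symm_comp_self, Function.comp_id]
  calc rowVec Q ᵥ* kron g h
    _ = ((rowVec Q ∘ finProdFinEquiv (m := 2) (n := 2)) ᵥ* (g ⊗ₖ h)) ∘ finProdFinEquiv.symm :=
      submatrix_vecMul_equiv (g ⊗ₖ h) (rowVec Q) (finProdFinEquiv (m := 2) (n := 2)).symm _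
    _ = vec (hᵀ * Qᵀ * g) ∘ finProdFinEquiv.symm := by rw [rowVec_comp, vec_vecMul_kronecker]
    _ = rowVec (gᵀ * Q * h) := by
      rw [rowVec, transpose_mul, transpose_mul, transpose_transpose, Matrix.mul_assoc]

/-- The matrix of structure constants of the algebra with product `u · v = (uᵀ Q v) w`, all of whose
products lie on the line of `w`. -/
def rankOneMSC [Mul F] (w : Fin 2 → F) (Q : Matrix (Fin 2) (Fin 2) F) :
    Matrix (Fin 2) (Fin 4) F :=
  vecMulVec w (rowVec Q)

section CommRing

variable [CommRing F]

theorem mul_rankOneMSC (g : Matrix (Fin 2) (Fin 2) F) (w : Fin 2 → F)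
    (Q : Matrix (Fin 2) (Fin 2) F) : g * rankOneMSC w Q = rankOneMSC (g *ᵥ w) Q :=
  mul_vecMulVec g w (rowVec Q)

theorem rankOneMSC_mul_kron (w : Fin 2 → F) (Q g h : Matrix (Fin 2) (Fin 2) F) :
    rankOneMSC w Q * kron g h = rankOneMSC w (gᵀ * Q * h) := by
  rw [rankOneMSC, vecMulVec_mul, rowVec_vecMul_kron, rankOneMSC]

theorem msc_E5_eq_rankOneMSC :
    (!![1, 0, 0, -1; -1, 0, 0, 1] : Matrix (Fin 2) (Fin 4) F) =
      rankOneMSC ![1, -1] !![1, 0; 0, -1] := by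
  ext i j
  fin_cases i <;> fin_cases j <;>
    simp [rankOneMSC, rowVec, vecMulVec_apply, finProdFinEquiv, Fin.divNat, Fin.modNat]

theorem eq_of_mulVec_eq_smul_of_transpose_mul_mul_eq_smul {g : Matrix (Fin 2) (Fin 2) F}
    (hg : IsUnit g) {c : F} (hw : g *ᵥ ![1, -1] = c • ![1, -1])
    (hQ : gᵀ * !![1, 0; 0, -1] * g = c • !![1, 0; 0, -1]) :
    g = !![g 0 0, 1 - g 0 0; 1 - g 0 0, g 0 0] := by
  have hw₀ : g 0 0 - g 0 1 = c := by
    simpa [mulVec, dotProduct, Fin.sum_univ_two, sub_eq_add_neg] using congrFun hw 0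
  have hw₁ : g 1 0 - g 1 1 = -c := by
    simpa [mulVec, dotProduct, Fin.sum_univ_two, sub_eq_add_neg] using congrFun hw 1
  have hQ₀₀ : g 0 0 * g 0 0 - g 1 0 * g 1 0 = c := by
    simpa [mul_apply, Fin.sum_univ_two, sub_eq_add_neg] using congrFun₂ hQ 0 0
  have hQ₀₁ : g 0 0 * g 0 1 - g 1 0 * g 1 1 = 0 := by
    simpa [mul_apply, Fin.sum_univ_two, sub_eq_add_neg] using congrFun₂ hQ 0 1
  have column_sums_eq : g 0 0 + g 1 0 = g 0 1 + g 1 1 := by linear_combination hw₀ + hw₁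
  have det_eq : g.det = (g 0 0 + g 1 0) * c := by
    rw [det_fin_two]
    linear_combination (g 0 0 + g 1 0) * hw₀ - g 0 0 * column_sums_eq
  have hdet : IsUnit ((g 0 0 + g 1 0) * c) := det_eq ▸ (isUnit_iff_isUnit_det g).mp hg
  obtain ⟨sum_isUnit, c_isUnit⟩ := IsUnit.mul_iff.mp hdet
  have symm : g 0 1 = g 1 0 := by
    apply sum_isUnit.mul_left_cancel
    linear_combination hQ₀₁ - g 1 0 * column_sums_eq
  have diag_eq : g 1 1 = g 0 0 := by linear_combination -column_sums_eq - symm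
  have sum_eq_one : g 0 0 + g 1 0 = 1 := by
    apply c_isUnit.mul_left_cancel
    linear_combination hQ₀₀ - (g 0 0 + g 1 0) * (hw₀ + symm)
  have hg₁₀ : g 1 0 = 1 - g 0 0 := eq_sub_of_add_eq' sum_eq_one
  conv_lhs => rw [eta_fin_two g, symm, diag_eq, hg₁₀]

theorem mulVec_one_neg_one (t : F) :
    !![t, 1 - t; 1 - t, t] *ᵥ ![1, -1] = (2 * t - 1) • ![1, -1] := by
  ext i
  fin_cases i <;> simp [mulVec, dotProduct, Fin.sum_univ_two] <;> ring

theorem transpose_mul_diag_one_neg_one_mul (t : F) :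
    !![t, 1 - t; 1 - t, t]ᵀ * !![1, 0; 0, -1] * !![t, 1 - t; 1 - t, t] =
      (2 * t - 1) • !![1, 0; 0, -1] := by
  ext i j
  fin_cases i <;> fin_cases j <;> simp [mul_apply, Fin.sum_univ_two] <;> ring

theorem isUnit_fin_two_iff_isUnit_two_mul_sub_one (t : F) :
    IsUnit !![t, 1 - t; 1 - t, t] ↔ IsUnit (2 * t - 1) := by
  rw [isUnit_iff_isUnit_det, det_fin_two_of]
  ring_nf

end CommRing

section Field

variable [Field F]

theorem mem_Aut_rankOneMSC_iff {w : Fin 2 → F} {Q : Matrix (Fin 2) (Fin 2) F} (hw : w ≠ 0)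
    (hQ : Q ≠ 0) {g : Matrix (Fin 2) (Fin 2) F} :
    g ∈ Aut (rankOneMSC w Q) ↔
      IsUnit g ∧ ∃ c : F, g *ᵥ w = c • w ∧ gᵀ * Q * g = c • Q := by
  have rowVec_ne_zero : rowVec Q ≠ 0 := rowVec_injective.ne hQ
  have rowVec_eq_smul_iff (c : F) :
      rowVec (gᵀ * Q * g) = c • rowVec Q ↔ gᵀ * Q * g = c • Q :=
    rowVec_injective.eq_iff (b := c • Q)
  rw [Aut, Set.mem_ofPred_eq, mul_rankOneMSC, rankOneMSC_mul_kron, rankOneMSC, rankOneMSC,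
    vecMulVec_eq_vecMulVec_iff hw rowVec_ne_zero]
  simp only [rowVec_eq_smul_iff]

theorem aut_E5_general :
    Aut (!![1, 0, 0, -1; -1, 0, 0, 1] : Matrix (Fin 2) (Fin 4) F) =
      {g | ∃ t : F, 2 * t ≠ 1 ∧ g = !![t, 1 - t; 1 - t, t]} := by
  have hw : (![1, -1] : Fin 2 → F) ≠ 0 := fun h ↦ one_ne_zero (congrFun h 0)
  have hQ : (!![1, 0; 0, -1] : Matrix (Fin 2) (Fin 2) F) ≠ 0 :=
    fun h ↦ one_ne_zero (congrFun₂ h 0 0)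
  have isUnit_iff (t : F) : IsUnit !![t, 1 - t; 1 - t, t] ↔ 2 * t ≠ 1 := by
    rw [isUnit_fin_two_iff_isUnit_two_mul_sub_one, isUnit_iff_ne_zero, sub_ne_zero]
  ext g
  rw [msc_E5_eq_rankOneMSC, mem_Aut_rankOneMSC_iff hw hQ]
  constructor
  · rintro ⟨hg, c, hgw, hgQ⟩
    have hg_eq := eq_of_mulVec_eq_smul_of_transpose_mul_mul_eq_smul hg hgw hgQ
    exact ⟨g 0 0, (isUnit_iff _).mp (hg_eq ▸ hg), hg_eq⟩
  · rintro ⟨t, ht, rfl⟩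
    exact ⟨(isUnit_iff t).mpr ht, 2 * t - 1, mulVec_one_neg_one t,
      transpose_mul_diag_one_neg_one_mul t⟩

end Field

theorem aut_E5 (F : Type*) [Field F] [IsAlgClosed F] (hchar : ringChar F ≠ 2) :
    Aut (!![1, 0, 0, -1; -1, 0, 0, 1] : Matrix (Fin 2) (Fin 4) F) =
      {g | ∃ t : F, t ≠ 1 / 2 ∧ g = !![t, 1 - t; 1 - t, t]} := by
  simp only [aut_E5_general, ne_eq, eq_div_iff (Ring.two_ne_zero hchar), mul_comm]
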